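/- Let θ : A → A^ℓ be a primitive substitution of constant length ℓ over a finite alphabet A such that X_θ is infinite, (X_θ,σ) has discrete spectrum, and c(θ) > 0. Then ac¯(σ|_{X_θ}) ≤ log ℓ / (log ℓ − log(ℓ − c(θ))). If moreover C(θ) ≠ ℓ, then ac_(σ|_{X_θ}) ≥ log ℓ / (log ℓ − log(ℓ − C(θ))). -/

import Mathlib

open Filter Topology Set MeasureTheory
open scoped ENNReal

noncomputable section

/-- The upper density of a set of natural numbers. -/
def upperDensity (E : Set ℕ) : ℝ :=
  Filter.limsup (fun n : ℕ =>
    (∑ k ∈ Finset.range n, E.indicator (fun _ => (1 : ℝ)) k) / n) Filter.atTop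

/-- `S` is an `(f,δ,ν)`-separated subset of `X`, with respect to the distance `ρ`. -/
def IsSepSet {α : Type*} (ρ : α → α → ℝ) (f : α → α) (X : Set α) (δ ν : ℝ) (S : Set α) : Prop :=
  S ⊆ X ∧ ∀ x ∈ S, ∀ y ∈ S, x ≠ y → ν ≤ upperDensity {k : ℕ | δ ≤ ρ (f^[k] x) (f^[k] y)}

/-- The asymptotic separation number `Sep(f,δ,ν)` of `f` on `X`. -/
def sepNum {α : Type*} (ρ : α → α → ℝ) (f : α → α) (X : Set α) (δ ν : ℝ) : ℕ∞ :=
  ⨆ (S : Set α) (_ : IsSepSet ρ f X δ ν S), S.encard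

/-- The quantity `log s / (- log ν)`, with value `∞` if `s = ∞`. -/
def logRatio (s : ℕ∞) (ν : ℝ) : ℝ≥0∞ :=
  if s = ⊤ then ⊤ else ENNReal.ofReal (Real.log (s.toNat : ℝ) / (- Real.log ν))

/-- The lower amorphic complexity of `f` on `X`. -/
def acLower {α : Type*} (ρ : α → α → ℝ) (f : α → α) (X : Set α) : ℝ≥0∞ :=
  ⨆ (δ : ℝ) (_ : 0 < δ),
    Filter.liminf (fun ν : ℝ => logRatio (sepNum ρ f X δ ν) ν) (𝓝[>] (0 : ℝ))

/-- The upper amorphic complexity of `f` on `X`. -/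
def acUpper {α : Type*} (ρ : α → α → ℝ) (f : α → α) (X : Set α) : ℝ≥0∞ :=
  ⨆ (δ : ℝ) (_ : 0 < δ),
    Filter.limsup (fun ν : ℝ => logRatio (sepNum ρ f X δ ν) ν) (𝓝[>] (0 : ℝ))

/-- The left shift on `A^ℤ`. -/
def shift {A : Type*} (x : ℤ → A) : ℤ → A := fun n => x (n + 1)

open scoped Classical in
/-- The Cantor metric `d(x,y) = 2^{-min{|k| : x_k ≠ y_k}}` on `A^ℤ`. -/
def cantorDist {A : Type*} (x y : ℤ → A) : ℝ :=
  if x = y then 0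
  else (2 : ℝ) ^ (-((sInf {n : ℕ | ∃ k : ℤ, k.natAbs = n ∧ x k ≠ y k} : ℕ) : ℤ))

/-- The Besicovitch pseudometric `D_1` on `A^ℤ`. -/
def besD1 {A : Type*} (x y : ℤ → A) : ℝ :=
  upperDensity {k : ℕ | x (k : ℤ) ≠ y (k : ℤ)}

/-- The Besicovitch pseudometric `D_B` associated to a map `f` and a distance `ρ`. -/
def besDB {α : Type*} (ρ : α → α → ℝ) (f : α → α) (x y : α) : ℝ :=
  Filter.limsup (fun n : ℕ => (∑ k ∈ Finset.range n, ρ (f^[k] x) (f^[k] y)) / n) Filter.atTop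

/-- The pseudometric `D_δ` on `A^ℤ` associated to a metric `ρ` on `A^ℤ`. -/
def Ddelta {A : Type*} (ρ : (ℤ → A) → (ℤ → A) → ℝ) (δ : ℝ) (x y : ℤ → A) : ℝ :=
  upperDensity {k : ℕ | δ ≤ ρ (shift^[k] x) (shift^[k] y)}

/-- The closure of the two-sided shift orbit of `x₀`. -/
def orbitClosure {A : Type*} [TopologicalSpace A] (x₀ : ℤ → A) : Set (ℤ → A) :=
  closure {y | ∃ k : ℤ, y = fun n => x₀ (n + k)}

/-- The extension of a constant length substitution `θ : A → A^ℓ` to `A^ℤ`,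
via `θ(x)_{ℓk+i} = θ(x_k)_i`. -/
def substApply {A : Type*} {ℓ : ℕ} (hℓ : 0 < ℓ) (θ : A → Fin ℓ → A)
    (x : ℤ → A) : ℤ → A := fun n =>
  θ (x (n / (ℓ : ℤ))) ⟨(n % (ℓ : ℤ)).toNat, by
    have h1 : 0 ≤ n % (ℓ : ℤ) := Int.emod_nonneg n (by exact_mod_cast hℓ.ne')
    have h2 : n % (ℓ : ℤ) < (ℓ : ℤ) := Int.emod_lt_of_pos n (by exact_mod_cast hℓ)
    omega⟩

/-- A constant length substitution is primitive if some power `θ^m` of it is such that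
every letter `b` occurs in every word `θ^m(a)`. -/
def IsPrimitive {A : Type*} {ℓ : ℕ} (hℓ : 0 < ℓ) (θ : A → Fin ℓ → A) : Prop :=
  ∃ m : ℕ, 1 ≤ m ∧ ∀ a b : A, ∃ j : ℤ, 0 ≤ j ∧ j < (ℓ : ℤ) ^ m ∧
    (substApply hℓ θ)^[m] (fun _ => a) j = b

open scoped Classical in
/-- The number of positions at which the words `θ(a)` and `θ(b)` agree. -/
def coincCount {A : Type*} {ℓ : ℕ} (θ : A → Fin ℓ → A) (a b : A) : ℕ :=
  (Finset.univ.filter (fun j : Fin ℓ => θ a j = θ b j)).card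

/-- `c(θ)`, the minimum of `coincCount θ a b` over pairs `a ≠ b`. -/
def cMin {A : Type*} {ℓ : ℕ} (θ : A → Fin ℓ → A) : ℕ :=
  sInf {n : ℕ | ∃ a b : A, a ≠ b ∧ coincCount θ a b = n}

/-- `C(θ)`, the maximum of `coincCount θ a b` over pairs `a ≠ b`. -/
def cMax {A : Type*} {ℓ : ℕ} (θ : A → Fin ℓ → A) : ℕ :=
  sSup {n : ℕ | ∃ a b : A, a ≠ b ∧ coincCount θ a b = n}

/-- `S` is `ε`-separated with respect to the distance `ρ`. -/
def IsEpsSeparated {α : Type*} (ρ : α → α → ℝ) (ε : ℝ) (S : Set α) : Prop :=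
  ∀ x ∈ S, ∀ y ∈ S, x ≠ y → ε ≤ ρ x y

/-- `M_ε(E)`: the maximal cardinality of an `ε`-separated subset of `E`. -/
def packNum {α : Type*} (ρ : α → α → ℝ) (ε : ℝ) (E : Set α) : ℕ∞ :=
  ⨆ (S : Set α) (_ : S ⊆ E ∧ IsEpsSeparated ρ ε S), S.encard

/-- The lower box dimension of `E` with respect to the distance `ρ`. -/
def lowerBoxDim {α : Type*} (ρ : α → α → ℝ) (E : Set α) : ℝ≥0∞ :=
  Filter.liminf (fun ε : ℝ => logRatio (packNum ρ ε E) ε) (𝓝[>] (0 : ℝ))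

/-- The upper box dimension of `E` with respect to the distance `ρ`. -/
def upperBoxDim {α : Type*} (ρ : α → α → ℝ) (E : Set α) : ℝ≥0∞ :=
  Filter.limsup (fun ε : ℝ => logRatio (packNum ρ ε E) ε) (𝓝[>] (0 : ℝ))

/-- Mean equicontinuity of `f` on `X` with respect to the distance `ρ`. -/
def MeanEquicontinuousOn {α : Type*} (ρ : α → α → ℝ) (f : α → α) (X : Set α) : Prop :=
  ∀ ν : ℝ, 0 < ν → ∃ δ : ℝ, 0 < δ ∧ ∀ x ∈ X, ∀ y ∈ X, ρ x y < δ → besDB ρ f x y < ν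

/-- The subshift `X` has discrete spectrum: for every shift-invariant Borel probability
measure giving `X` full measure (there is exactly one for the systems under consideration),
`L²` has a Hilbert basis of eigenfunctions of the shift. -/
def HasDiscreteSpectrum {A : Type*} [MeasurableSpace A] (X : Set (ℤ → A)) : Prop :=
  ∀ μ : Measure (ℤ → A), IsProbabilityMeasure μ → MeasurePreserving shift μ μ → μ X = 1 →
    ∃ (ι : Type) (b : HilbertBasis ι ℂ (Lp ℂ 2 μ)), ∀ i : ι, ∃ c : ℂ,
      (fun z => (b i : Lp ℂ 2 μ) (shift z)) =ᵐ[μ] (fun z => c * (b i : Lp ℂ 2 μ) z)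

end

/-!
Each application of `θ` turns a mismatch between two sequences into at least `ℓ - C(θ)` and at
most `ℓ - c(θ)` mismatches per block of length `ℓ`, so `θ` multiplies the pseudometric `D_1` by a
factor between `(ℓ - C(θ)) / ℓ` and `(ℓ - c(θ)) / ℓ`, and `D_δ` is bounded by a multiple of `D_1`.

For the upper bound, every point of `X_θ` is `σ^j(θ^N(z))` for some `j < ℓ^N` and some `z`, so
`X_θ` is covered by `ℓ^N` sets of `D_1`-diameter at most `((ℓ - c(θ)) / ℓ)^N`.

For the lower bound, the `ℓ^N` points `σ^i(x₀)`, `i < ℓ^N`, are pairwise at `D_1`-distance at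
least `κ ((ℓ - C(θ)) / ℓ)^N`, that is, `x₀` is that far from `σ^m(x₀)` for `0 < m < ℓ^N`. If `m`
is a power `ℓ^n`, the two points are the `θ^n`-images of a point and its shift by one. In general
choose `n` with `m < ℓ^n ≤ ℓ m`. As `c(θ) > 0`, some power `θ^k` has a constant column, so `x₀`
and `σ^L(x₀)` with `L = ℓ^(n + k)` agree on a window of length `ℓ^n` in each block of length `L`.
Moving in steps of size `m`, one enters a window after at most `Q = ℓ^(k + 1)` steps, and the last
mismatch of `x₀` and `σ^L(x₀)` before that is a mismatch of `x₀` and `σ^m(x₀)` there or `L` places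
later. Hence `D_1(x₀, σ^L(x₀)) ≤ 2 Q D_1(x₀, σ^m(x₀))`.
-/


/-! ### Upper density -/

section UpperDensity

variable {E F : Set ℕ}

lemma upperDensity_eq_limsup_count (E : Set ℕ) [DecidablePred (· ∈ E)] :
    upperDensity E = limsup (fun n : ℕ => (Nat.count (· ∈ E) n : ℝ) / n) atTop := by
  simp [upperDensity, Nat.count_eq_card_filter_range, Set.indicator_apply]

lemma count_div_nonneg (E : Set ℕ) [DecidablePred (· ∈ E)] (n : ℕ) :
    0 ≤ (Nat.count (· ∈ E) n : ℝ) / n := by positivity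

lemma count_div_le_one (E : Set ℕ) [DecidablePred (· ∈ E)] (n : ℕ) :
    (Nat.count (· ∈ E) n : ℝ) / n ≤ 1 :=
  div_le_one_of_le₀ (by exact_mod_cast Nat.count_le _) n.cast_nonneg

lemma isBoundedUnder_count_div (E : Set ℕ) [DecidablePred (· ∈ E)] :
    atTop.IsBoundedUnder (· ≤ ·) fun n : ℕ => (Nat.count (· ∈ E) n : ℝ) / n :=
  isBoundedUnder_of ⟨1, count_div_le_one E⟩

lemma isCoboundedUnder_count_div (E : Set ℕ) [DecidablePred (· ∈ E)] :
    atTop.IsCoboundedUnder (· ≤ ·) fun n : ℕ => (Nat.count (· ∈ E) n : ℝ) / n :=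
  .of_frequently_ge (.of_forall (count_div_nonneg E))

lemma upperDensity_nonneg (E : Set ℕ) : 0 ≤ upperDensity E := by
  classical
  rw [upperDensity_eq_limsup_count]
  exact le_limsup_of_frequently_le (.of_forall (count_div_nonneg E)) (isBoundedUnder_count_div E)

lemma upperDensity_le_one (E : Set ℕ) : upperDensity E ≤ 1 := by
  classical
  rw [upperDensity_eq_limsup_count]
  exact limsup_le_of_le (isCoboundedUnder_count_div E) (.of_forall (count_div_le_one E))

lemma upperDensity_empty : upperDensity ∅ = 0 := by
  simp [upperDensity]

lemma upperDensity_univ : upperDensity univ = 1 := by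
  refine (tendsto_const_nhds.congr' ?_).limsup_eq
  filter_upwards [eventually_gt_atTop 0] with n hn
  simp [hn.ne']

lemma eventually_count_le_of_upperDensity_lt [DecidablePred (· ∈ E)] {c : ℝ}
    (h : upperDensity E < c) :
    ∀ᶠ n in atTop, (Nat.count (· ∈ E) n : ℝ) ≤ c * n := by
  rw [upperDensity_eq_limsup_count] at h
  filter_upwards [eventually_lt_of_limsup_lt h (isBoundedUnder_count_div E),
    eventually_gt_atTop 0] with n hlt hn
  exact ((div_lt_iff₀ (by exact_mod_cast hn)).1 hlt).le

lemma upperDensity_le_of_eventually_count_le [DecidablePred (· ∈ E)] {c b : ℝ}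
    (h : ∀ᶠ n in atTop, (Nat.count (· ∈ E) n : ℝ) ≤ c * n + b) : upperDensity E ≤ c := by
  have hlim : Tendsto (fun n : ℕ => c + b / (n : ℝ)) atTop (𝓝 c) := by
    simpa using tendsto_const_nhds.add (tendsto_const_div_atTop_nhds_zero_nat b)
  rw [upperDensity_eq_limsup_count, ← hlim.limsup_eq]
  refine limsup_le_limsup ?_ (isCoboundedUnder_count_div E) hlim.isBoundedUnder_le
  filter_upwards [h, eventually_gt_atTop 0] with n hle hn
  have hn : (0 : ℝ) < n := by exact_mod_cast hn
  rw [div_le_iff₀ hn, add_mul, div_mul_cancel₀ b hn.ne']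
  exact hle

lemma upperDensity_mono (h : E ⊆ F) : upperDensity E ≤ upperDensity F := by
  classical
  refine le_of_forall_gt_imp_ge_of_dense fun c hc =>
    upperDensity_le_of_eventually_count_le (b := 0) ?_
  filter_upwards [eventually_count_le_of_upperDensity_lt hc] with n hn
  have hcount : (Nat.count (· ∈ E) n : ℝ) ≤ Nat.count (· ∈ F) n := by
    exact_mod_cast Nat.count_mono_left fun k _ hk => h hk
  linarith

lemma count_le_count_add_count {p q r : ℕ → Prop} [DecidablePred p] [DecidablePred q]
    [DecidablePred r] (h : ∀ k, p k → q k ∨ r k) (n : ℕ) :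
    Nat.count p n ≤ Nat.count q n + Nat.count r n := by
  simp only [Nat.count_eq_card_filter_range]
  refine (Finset.card_le_card ?_).trans (Finset.card_union_le _ _)
  rw [← Finset.filter_or]
  exact Finset.monotone_filter_right _ fun k _ => h k

lemma upperDensity_le_add_of_subset_union {G : Set ℕ} (h : G ⊆ E ∪ F) :
    upperDensity G ≤ upperDensity E + upperDensity F := by
  classical
  refine le_of_forall_pos_le_add fun ε hε =>
    upperDensity_le_of_eventually_count_le (b := 0) ?_
  have hlt (D : Set ℕ) : upperDensity D < upperDensity D + ε / 2 := by linarith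
  filter_upwards [eventually_count_le_of_upperDensity_lt (hlt E),
    eventually_count_le_of_upperDensity_lt (hlt F)] with n hE hF
  have hcount : (Nat.count (· ∈ G) n : ℝ) ≤ Nat.count (· ∈ E) n + Nat.count (· ∈ F) n := by
    exact_mod_cast count_le_count_add_count (fun _ hk => h hk) n
  linarith

lemma upperDensity_biUnion_le {ι : Type*} (s : Finset ι) (E : ι → Set ℕ) :
    upperDensity (⋃ i ∈ s, E i) ≤ ∑ i ∈ s, upperDensity (E i) := by
  classical
  induction s using Finset.induction_on with
  | empty => simp [upperDensity_empty]
  | insert i s hi ih =>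
    rw [Finset.set_biUnion_insert, Finset.sum_insert hi]
    exact (upperDensity_le_add_of_subset_union Subset.rfl).trans (by gcongr)

lemma upperDensity_le_mul_of_count_le [DecidablePred (· ∈ E)] [DecidablePred (· ∈ F)]
    {L : ℕ} (hL : 0 < L) {w b : ℝ} (hw : 0 ≤ w)
    (h : ∀ n, (Nat.count (· ∈ F) (L * n) : ℝ) ≤ w * Nat.count (· ∈ E) n + b) :
    upperDensity F ≤ w / L * upperDensity E := by
  have key : ∀ c > upperDensity E, upperDensity F ≤ w / L * c := by
    intro c hc
    refine upperDensity_le_of_eventually_count_le (b := w * c + b) ?_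
    have hc0 : 0 ≤ c := (upperDensity_nonneg E).trans hc.le
    have hev := (Nat.tendsto_div_const_atTop hL.ne').eventually
      ((tendsto_add_atTop_nat 1).eventually (eventually_count_le_of_upperDensity_lt hc))
    filter_upwards [hev] with n hn
    have hceil : n ≤ L * (n / L + 1) := (Nat.lt_mul_div_succ n hL).le
    calc (Nat.count (· ∈ F) n : ℝ)
        ≤ Nat.count (· ∈ F) (L * (n / L + 1)) := by exact_mod_cast Nat.count_monotone _ hceil
      _ ≤ w * Nat.count (· ∈ E) (n / L + 1) + b := h _
      _ ≤ w * (c * ((n / L : ℕ) + 1)) + b := by gcongr; exact_mod_cast hn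
      _ ≤ w * (c * (n / L + 1)) + b := by gcongr; exact Nat.cast_div_le
      _ = w / L * c * n + (w * c + b) := by ring
  have hlim : Tendsto (fun c => w / L * c) (𝓝[>] upperDensity E)
      (𝓝 (w / L * upperDensity E)) :=
    ((continuous_const_mul _).tendsto _).mono_left nhdsWithin_le_nhds
  exact ge_of_tendsto hlim (eventually_mem_nhdsWithin.mono key)

lemma mul_upperDensity_le_of_le_count [DecidablePred (· ∈ E)] [DecidablePred (· ∈ F)]
    {L : ℕ} (hL : 0 < L) {w : ℝ}
    (h : ∀ n, w * Nat.count (· ∈ E) n ≤ Nat.count (· ∈ F) (L * n)) :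
    w / L * upperDensity E ≤ upperDensity F := by
  have hL' : (0 : ℝ) < L := by exact_mod_cast hL
  rcases le_or_gt w 0 with hw | hw
  · exact (mul_nonpos_of_nonpos_of_nonneg (div_nonpos_of_nonpos_of_nonneg hw hL'.le)
      (upperDensity_nonneg E)).trans (upperDensity_nonneg F)
  refine le_of_forall_gt_imp_ge_of_dense fun c hc => ?_
  have hE : upperDensity E ≤ c * L / w := by
    refine upperDensity_le_of_eventually_count_le (b := 0) ?_
    filter_upwards [(tendsto_id.const_mul_atTop' hL).eventually
      (eventually_count_le_of_upperDensity_lt hc)] with n hn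
    rw [add_zero, div_mul_eq_mul_div, le_div_iff₀' hw]
    calc w * Nat.count (· ∈ E) n ≤ Nat.count (· ∈ F) (L * n) := h n
      _ ≤ c * (L * n : ℕ) := hn
      _ = c * L * n := by push_cast; ring
  calc w / L * upperDensity E ≤ w / L * (c * L / w) := by gcongr
    _ = c := by field_simp

lemma upperDensity_add_right (E : Set ℕ) (m : ℕ) :
    upperDensity {k | k + m ∈ E} = upperDensity E := by
  classical
  have hcount (n : ℕ) : Nat.count (· ∈ E) (n + m) =
      Nat.count (· ∈ {k | k + m ∈ E}) n + Nat.count (· ∈ E) m := Nat.count_add' _ _ _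
  have hle (n : ℕ) : Nat.count (· ∈ E) (n + m) ≤ Nat.count (· ∈ E) n + m := by
    rw [Nat.count_add]
    gcongr
    exact Nat.count_le _
  have hm : Nat.count (· ∈ E) m ≤ m := Nat.count_le _
  apply le_antisymm
  · simpa using upperDensity_le_mul_of_count_le (E := E) (F := {k | k + m ∈ E}) one_pos
      zero_le_one (b := m) fun n => by
        rw [one_mul, one_mul]
        exact_mod_cast (by linarith [hcount n, hle n])
  · simpa using upperDensity_le_mul_of_count_le (E := {k | k + m ∈ E}) (F := E) one_pos
      zero_le_one (b := m) fun n => by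
        rw [one_mul, one_mul]
        exact_mod_cast (by linarith [hcount n, Nat.count_monotone (· ∈ E) (n.le_add_right m)])

lemma upperDensity_le_mul_of_block_count_le [DecidablePred (· ∈ F)] {L : ℕ}
    (hL : 0 < L) {w : ℝ} (hw : 0 ≤ w)
    (hmem : ∀ n ∈ E, (Nat.count (fun i => L * n + i ∈ F) L : ℝ) ≤ w)
    (hnot : ∀ n ∉ E, ∀ i < L, L * n + i ∉ F) :
    upperDensity F ≤ w / L * upperDensity E := by
  classical
  refine upperDensity_le_mul_of_count_le hL hw (b := 0) fun n => ?_
  induction n with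
  | zero => simp
  | succ n ih =>
    rw [mul_add_one, Nat.count_add _ (L * n) L, Nat.count_succ]
    push_cast
    split_ifs with hn
    · linarith [hmem n hn]
    · rw [Nat.count_of_forall_not (hnot n hn)]
      push_cast
      linarith

lemma mul_upperDensity_le_of_le_block_count [DecidablePred (· ∈ F)] {L : ℕ}
    (hL : 0 < L) {w : ℝ}
    (h : ∀ n ∈ E, w ≤ Nat.count (fun i => L * n + i ∈ F) L) :
    w / L * upperDensity E ≤ upperDensity F := by
  classical
  refine mul_upperDensity_le_of_le_count hL fun n => ?_
  induction n with
  | zero => simp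
  | succ n ih =>
    rw [mul_add_one, Nat.count_add _ (L * n) L, Nat.count_succ]
    push_cast
    split_ifs with hn
    · linarith [h n hn]
    · linarith [(Nat.count (fun i => L * n + i ∈ F) L).cast_nonneg (α := ℝ)]

lemma upperDensity_le_mul_upperDensity_exit {m Q : ℕ} (h : ∀ k, ∃ t ≤ Q, k + t * m ∉ E) :
    upperDensity E ≤ Q * upperDensity {k | k ∈ E ∧ k + m ∉ E} := by
  have hsub : E ⊆ ⋃ t ∈ Finset.range Q, {k | k + t * m ∈ {k | k ∈ E ∧ k + m ∉ E}} := by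
    intro k hk
    obtain ⟨t, htQ, ht⟩ := h k
    obtain ⟨s, hs, hs'⟩ : ∃ s < t, k + s * m ∈ E ∧ k + (s + 1) * m ∉ E := by
      by_contra! hstay
      have hall : ∀ s ≤ t, k + s * m ∈ E := by
        intro s
        induction s with
        | zero => simpa using hk
        | succ s ih => exact fun hs => hstay s hs (ih (by lia))
      exact ht (hall t le_rfl)
    refine mem_biUnion (x := s) (by simpa using hs.trans_le htQ) ⟨hs'.1, ?_⟩
    rw [add_assoc, ← add_one_mul]
    exact hs'.2
  calc upperDensity E
      ≤ ∑ t ∈ Finset.range Q, upperDensity {k | k + t * m ∈ {k | k ∈ E ∧ k + m ∉ E}} :=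
        (upperDensity_mono hsub).trans (upperDensity_biUnion_le _ _)
    _ = Q * upperDensity {k | k ∈ E ∧ k + m ∉ E} := by
      simp_rw [upperDensity_add_right, Finset.sum_const, Finset.card_range, nsmul_eq_mul]

end UpperDensity

/-! ### Shifts and the pseudometrics `D_1` and `D_δ` -/

section Besicovitch

variable {A : Type*}

/-- The power `σ^s` of the left shift, for an arbitrary integer exponent `s`. -/
def shiftBy (s : ℤ) (x : ℤ → A) : ℤ → A := fun n => x (n + s)

lemma shiftBy_zero (x : ℤ → A) : shiftBy 0 x = x := by
  funext n
  simp [shiftBy]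

lemma shiftBy_shiftBy (s t : ℤ) (x : ℤ → A) : shiftBy s (shiftBy t x) = shiftBy (s + t) x := by
  funext n
  simp [shiftBy, add_assoc]

lemma iterate_shift (k : ℕ) (x : ℤ → A) : shift^[k] x = shiftBy k x := by
  induction k with
  | zero => simp [shiftBy_zero]
  | succ k ih =>
    rw [Function.iterate_succ_apply', ih]
    funext n
    simp [shift, shiftBy, add_right_comm, add_assoc]

lemma besD1_self (x : ℤ → A) : besD1 x x = 0 := by
  simp [besD1, upperDensity_empty]

lemma besD1_comm (x y : ℤ → A) : besD1 x y = besD1 y x := by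
  simp only [besD1, ne_comm]

lemma besD1_nonneg (x y : ℤ → A) : 0 ≤ besD1 x y := upperDensity_nonneg _

lemma besD1_le_one (x y : ℤ → A) : besD1 x y ≤ 1 := upperDensity_le_one _

lemma besD1_shiftBy_natCast (m : ℕ) (x y : ℤ → A) :
    besD1 (shiftBy m x) (shiftBy m y) = besD1 x y := by
  simpa [besD1, shiftBy] using upperDensity_add_right {k : ℕ | x k ≠ y k} m

lemma besD1_shiftBy (s : ℤ) (x y : ℤ → A) :
    besD1 (shiftBy s x) (shiftBy s y) = besD1 x y := by
  obtain ⟨m, rfl | rfl⟩ := s.eq_nat_or_neg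
  · exact besD1_shiftBy_natCast m x y
  · rw [← besD1_shiftBy_natCast m]
    simp [shiftBy_shiftBy, shiftBy_zero]

lemma exists_ne_of_pow_lt_cantorDist {x y : ℤ → A} {N : ℕ} (h : (2⁻¹ : ℝ) ^ N < cantorDist x y) :
    ∃ i ∈ Finset.Icc (-N : ℤ) N, x i ≠ y i := by
  have hxy : x ≠ y := by
    rintro rfl
    simp only [cantorDist, if_true] at h
    exact absurd h (not_lt.2 (by positivity))
  set S := {n : ℕ | ∃ k : ℤ, k.natAbs = n ∧ x k ≠ y k}
  have hS' : S.Nonempty := by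
    obtain ⟨k, hk⟩ := Function.ne_iff.1 hxy
    exact ⟨_, k, rfl, hk⟩
  obtain ⟨k, hk, hne⟩ := Nat.sInf_mem hS'
  have hlt : sInf S < N := by
    rw [cantorDist, if_neg hxy, zpow_neg, zpow_natCast, ← inv_pow] at h
    exact (pow_lt_pow_iff_right_of_lt_one₀ (by norm_num) (by norm_num)).1 h
  exact ⟨k, Finset.mem_Icc.2 (by lia), hne⟩

lemma one_le_cantorDist_of_ne {x y : ℤ → A} (h : x 0 ≠ y 0) : 1 ≤ cantorDist x y := by
  have hxy : x ≠ y := fun hxy => h (congrFun hxy 0)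
  have hmem : 0 ∈ {n : ℕ | ∃ k : ℤ, k.natAbs = n ∧ x k ≠ y k} := ⟨0, rfl, h⟩
  simp [cantorDist, hxy, Nat.sInf_eq_zero.2 (.inl hmem)]

lemma besD1_le_Ddelta_cantorDist_one (x y : ℤ → A) : besD1 x y ≤ Ddelta cantorDist 1 x y := by
  refine upperDensity_mono fun k hk => one_le_cantorDist_of_ne ?_
  simpa [iterate_shift, shiftBy] using hk

lemma Ddelta_cantorDist_le {δ : ℝ} {N : ℕ} (hδ : (2⁻¹ : ℝ) ^ N < δ) (x y : ℤ → A) :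
    Ddelta cantorDist δ x y ≤ (2 * N + 1) * besD1 x y := by
  have hsub : {k : ℕ | δ ≤ cantorDist (shift^[k] x) (shift^[k] y)} ⊆
      ⋃ i ∈ Finset.Icc (-N : ℤ) N, {k : ℕ | shiftBy i x k ≠ shiftBy i y k} := by
    intro k hk
    obtain ⟨i, hi, hne⟩ := exists_ne_of_pow_lt_cantorDist (hδ.trans_le hk)
    rw [iterate_shift, iterate_shift] at hne
    exact mem_biUnion hi (by simpa [shiftBy, add_comm] using hne)
  calc Ddelta cantorDist δ x y
      ≤ ∑ i ∈ Finset.Icc (-N : ℤ) N, besD1 (shiftBy i x) (shiftBy i y) :=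
        (upperDensity_mono hsub).trans (upperDensity_biUnion_le _ _)
    _ = (2 * N + 1) * besD1 x y := by
      have hcard : (Finset.Icc (-N : ℤ) N).card = 2 * N + 1 := by
        rw [Int.card_Icc]; lia
      simp only [besD1_shiftBy, Finset.sum_const, hcard, nsmul_eq_mul]
      push_cast
      ring

lemma exists_forall_Ddelta_cantorDist_le {δ : ℝ} (hδ : 0 < δ) :
    ∃ B : ℝ, 0 < B ∧ ∀ x y : ℤ → A, Ddelta cantorDist δ x y ≤ B * besD1 x y := by
  obtain ⟨N, hN⟩ := exists_pow_lt_of_lt_one hδ (by norm_num : (2⁻¹ : ℝ) < 1)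
  exact ⟨2 * N + 1, by positivity, Ddelta_cantorDist_le hN⟩

end Besicovitch

/-! ### Substitutions of constant length -/

section Substitution

variable {A : Type*} {ℓ : ℕ} (hℓ : 0 < ℓ) (θ : A → Fin ℓ → A)

include hℓ in
lemma exists_eq_mul_add (n : ℤ) : ∃ (s : ℤ) (i : Fin ℓ), n = ℓ * s + i := by
  have hℓ' : (0 : ℤ) < ℓ := by exact_mod_cast hℓ
  refine ⟨n / ℓ, ⟨(n % ℓ).toNat, ?_⟩, ?_⟩
  · exact (Int.toNat_lt' hℓ).2 (Int.emod_lt_of_pos n hℓ')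
  · simp [Int.toNat_of_nonneg (Int.emod_nonneg n hℓ'.ne'), Int.mul_ediv_add_emod]

lemma substApply_mul_add (x : ℤ → A) (s : ℤ) (i : Fin ℓ) :
    substApply hℓ θ x (ℓ * s + i) = θ (x s) i := by
  have hℓ' : (ℓ : ℤ) ≠ 0 := by exact_mod_cast hℓ.ne'
  have hi : (i : ℤ) < ℓ := by exact_mod_cast i.2
  have hdiv : ((ℓ : ℤ) * s + i) / ℓ = s := by
    rw [Int.mul_add_ediv_left _ _ hℓ', Int.ediv_eq_zero_of_lt (by lia) hi, add_zero]
  have hmod : ((ℓ : ℤ) * s + i) % ℓ = i := by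
    rw [Int.mul_add_emod_self_left, Int.emod_eq_of_lt (by lia) hi]
  simp [substApply, hdiv, hmod]

lemma substApply_shiftBy (s : ℤ) (x : ℤ → A) :
    substApply hℓ θ (shiftBy s x) = shiftBy (ℓ * s) (substApply hℓ θ x) := by
  funext n
  obtain ⟨t, i, rfl⟩ := exists_eq_mul_add hℓ n
  have hadd : (ℓ : ℤ) * t + i + ℓ * s = ℓ * (t + s) + i := by ring
  simp only [shiftBy, hadd, substApply_mul_add]

/-- The power `θ^k`, as a substitution of constant length `ℓ^k`. -/
def substPow (k : ℕ) : A → Fin (ℓ ^ k) → A := fun a i =>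
  (substApply hℓ θ)^[k] (fun _ => a) i

lemma iterate_substApply_congr {x y : ℤ → A} {s t : ℤ} (h : x s = y t) (k : ℕ) {i : ℕ}
    (hi : i < ℓ ^ k) :
    (substApply hℓ θ)^[k] x ((ℓ ^ k : ℕ) * s + i) =
      (substApply hℓ θ)^[k] y ((ℓ ^ k : ℕ) * t + i) := by
  induction k generalizing i with
  | zero => simpa [Nat.lt_one_iff.1 (by simpa using hi)] using h
  | succ k ih =>
    have hsplit (s : ℤ) : ((ℓ ^ (k + 1) : ℕ) * s + i : ℤ) =
        ℓ * ((ℓ ^ k : ℕ) * s + (i / ℓ : ℕ)) + (⟨i % ℓ, Nat.mod_lt i hℓ⟩ : Fin ℓ) := by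
      conv_lhs => rw [← Nat.div_add_mod i ℓ]
      push_cast
      ring
    have hdiv : i / ℓ < ℓ ^ k := (Nat.div_lt_iff_lt_mul hℓ).2 (by rwa [← pow_succ])
    rw [Function.iterate_succ_apply', Function.iterate_succ_apply', hsplit, hsplit,
      substApply_mul_add, substApply_mul_add, ih hdiv]

lemma iterate_substApply (k : ℕ) :
    (substApply hℓ θ)^[k] = substApply (pow_pos hℓ k) (substPow hℓ θ k) := by
  funext x n
  obtain ⟨s, i, rfl⟩ := exists_eq_mul_add (pow_pos hℓ k) n
  rw [substApply_mul_add]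
  simpa [substPow] using iterate_substApply_congr hℓ θ (y := fun _ => x s) (t := 0) rfl k i.2

lemma substPow_succ_apply {k : ℕ} (a : A) {s : Fin (ℓ ^ k)} {i : Fin ℓ} {j : Fin (ℓ ^ (k + 1))}
    (hj : (j : ℕ) = ℓ * s + i) :
    substPow hℓ θ (k + 1) a j = θ (substPow hℓ θ k a s) i := by
  rw [substPow, Function.iterate_succ_apply', hj]
  exact_mod_cast substApply_mul_add hℓ θ _ s i

lemma mem_range_iterate_of_isPeriodicPt {α : Type*} {f : α → α} {x : α} {p : ℕ} (hp : 0 < p)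
    (h : f.IsPeriodicPt p x) (k : ℕ) : x ∈ range f^[k] := by
  have hpk : f^[p * k] x = x := h.mul_const k
  rw [← Nat.add_sub_of_le (Nat.le_mul_of_pos_left k hp), Function.iterate_add_apply] at hpk
  exact ⟨_, hpk⟩

section Topology

variable [TopologicalSpace A]

lemma continuous_shiftBy (s : ℤ) : Continuous (shiftBy s : (ℤ → A) → ℤ → A) :=
  continuous_pi fun n => continuous_apply (n + s)

lemma shiftBy_mem_orbitClosure (k : ℤ) (x₀ : ℤ → A) : shiftBy k x₀ ∈ orbitClosure x₀ :=
  subset_closure ⟨k, rfl⟩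

variable [DiscreteTopology A]

lemma isClosed_range_substApply : IsClosed (range (substApply hℓ θ)) := by
  have hrange : range (substApply hℓ θ) =
      ⋂ s : ℤ, (fun x : ℤ → A => fun i : Fin ℓ => x (ℓ * s + i)) ⁻¹' range θ := by
    ext x
    simp only [mem_iInter, mem_preimage]
    constructor
    · rintro ⟨z, rfl⟩ s
      exact ⟨z s, funext fun i => (substApply_mul_add hℓ θ z s i).symm⟩
    · intro h
      choose z hz using h
      refine ⟨z, funext fun n => ?_⟩
      obtain ⟨s, i, rfl⟩ := exists_eq_mul_add hℓ n
      rw [substApply_mul_add, hz]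
  rw [hrange]
  exact isClosed_iInter fun s => (isClosed_discrete _).preimage (by fun_prop)

lemma exists_eq_shiftBy_substApply_of_mem_orbitClosure {x₀ x : ℤ → A}
    (hx₀ : x₀ ∈ range (substApply hℓ θ)) (hx : x ∈ orbitClosure x₀) :
    ∃ (j : Fin ℓ) (z : ℤ → A), x = shiftBy j (substApply hℓ θ z) := by
  obtain ⟨z₀, rfl⟩ := hx₀
  have hclosed : IsClosed (⋃ j : Fin ℓ, shiftBy (-j : ℤ) ⁻¹' range (substApply hℓ θ)) :=
    isClosed_iUnion_of_finite fun j =>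
      (isClosed_range_substApply hℓ θ).preimage (continuous_shiftBy _)
  have horbit : {y | ∃ k : ℤ, y = shiftBy k (substApply hℓ θ z₀)} ⊆
      ⋃ j : Fin ℓ, shiftBy (-j : ℤ) ⁻¹' range (substApply hℓ θ) := by
    rintro _ ⟨k, rfl⟩
    obtain ⟨s, j, rfl⟩ := exists_eq_mul_add hℓ k
    refine mem_iUnion.2 ⟨j, shiftBy s z₀, ?_⟩
    rw [substApply_shiftBy, shiftBy_shiftBy, neg_add_cancel_comm_assoc]
  obtain ⟨j, z, hz⟩ := mem_iUnion.1 (closure_minimal horbit hclosed hx)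
  exact ⟨j, z, by rw [hz, shiftBy_shiftBy, add_neg_cancel, shiftBy_zero]⟩

end Topology

end Substitution

/-! ### Coincidences -/

section Coincidence

variable {A : Type*} {ℓ : ℕ} (hℓ : 0 < ℓ) (θ : A → Fin ℓ → A)

lemma coincCount_le (a b : A) : coincCount θ a b ≤ ℓ :=
  (Finset.card_le_univ _).trans_eq (Fintype.card_fin ℓ)

variable {θ} in
lemma cMin_le_coincCount {a b : A} (hab : a ≠ b) : cMin θ ≤ coincCount θ a b :=
  Nat.sInf_le ⟨a, b, hab, rfl⟩

variable {θ} in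
lemma coincCount_le_cMax {a b : A} (hab : a ≠ b) : coincCount θ a b ≤ cMax θ :=
  le_csSup ⟨ℓ, by rintro _ ⟨a, b, -, rfl⟩; exact coincCount_le θ a b⟩ ⟨a, b, hab, rfl⟩

variable {θ} in
lemma nontrivial_of_cMin_pos (h : 0 < cMin θ) : Nontrivial A := by
  obtain ⟨_, a, b, hab, -⟩ := Nat.nonempty_of_pos_sInf h
  exact ⟨a, b, hab⟩

lemma cMin_le_length : cMin θ ≤ ℓ := by
  rcases Nat.eq_zero_or_pos (cMin θ) with h | h
  · exact h.trans_le ℓ.zero_le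
  · obtain ⟨a, b, hab⟩ := nontrivial_of_cMin_pos h
    exact (cMin_le_coincCount hab).trans (coincCount_le θ a b)

lemma cMax_le_length : cMax θ ≤ ℓ :=
  csSup_le' (by rintro _ ⟨a, b, -, rfl⟩; exact coincCount_le θ a b)

lemma sub_cMin_div_nonneg : 0 ≤ ((ℓ : ℝ) - cMin θ) / ℓ :=
  div_nonneg (sub_nonneg.2 (by exact_mod_cast cMin_le_length θ)) ℓ.cast_nonneg

lemma sub_cMax_div_nonneg : 0 ≤ ((ℓ : ℝ) - cMax θ) / ℓ :=
  div_nonneg (sub_nonneg.2 (by exact_mod_cast cMax_le_length θ)) ℓ.cast_nonneg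

lemma count_substApply_ne_add_coincCount (x y : ℤ → A) (n : ℕ)
    [DecidablePred fun i : ℕ => ℓ * n + i ∈ {k : ℕ | substApply hℓ θ x k ≠ substApply hℓ θ y k}] :
    Nat.count (fun i => ℓ * n + i ∈ {k : ℕ | substApply hℓ θ x k ≠ substApply hℓ θ y k}) ℓ +
      coincCount θ (x n) (y n) = ℓ := by
  classical
  have hcount : Nat.count
      (fun i => ℓ * n + i ∈ {k : ℕ | substApply hℓ θ x k ≠ substApply hℓ θ y k}) ℓ =
      (Finset.univ.filter fun i : Fin ℓ => ¬ θ (x n) i = θ (y n) i).card := by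
    rw [Nat.count_eq_card_filter_range, Finset.card_filter, Finset.sum_range,
      ← Finset.card_filter]
    simp [substApply_mul_add]
  rw [hcount, coincCount, add_comm, Finset.card_filter_add_card_filter_not, Finset.card_univ,
    Fintype.card_fin]

lemma besD1_substApply_le (x y : ℤ → A) :
    besD1 (substApply hℓ θ x) (substApply hℓ θ y) ≤ ((ℓ : ℝ) - cMin θ) / ℓ * besD1 x y := by
  classical
  refine upperDensity_le_mul_of_block_count_le hℓ ?_ (fun n hn => ?_) fun n hn i hi => ?_
  · exact sub_nonneg.2 (by exact_mod_cast cMin_le_length θ)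
  · have hsum := count_substApply_ne_add_coincCount hℓ θ x y n
    have hmin := cMin_le_coincCount (θ := θ) hn
    rw [le_sub_iff_add_le]
    exact_mod_cast (by lia)
  · have hxy : x n = y n := not_not.1 hn
    have happ (z : ℤ → A) := substApply_mul_add hℓ θ z n ⟨i, hi⟩
    simp only at happ
    simp [happ, hxy]

lemma le_besD1_substApply (x y : ℤ → A) :
    ((ℓ : ℝ) - cMax θ) / ℓ * besD1 x y ≤ besD1 (substApply hℓ θ x) (substApply hℓ θ y) := by
  classical
  refine mul_upperDensity_le_of_le_block_count hℓ fun n hn => ?_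
  have hsum := count_substApply_ne_add_coincCount hℓ θ x y n
  have hmax := coincCount_le_cMax (θ := θ) hn
  rw [sub_le_iff_le_add]
  exact_mod_cast (by lia)

lemma besD1_iterate_substApply_le (k : ℕ) (x y : ℤ → A) :
    besD1 ((substApply hℓ θ)^[k] x) ((substApply hℓ θ)^[k] y) ≤
      (((ℓ : ℝ) - cMin θ) / ℓ) ^ k * besD1 x y := by
  have hnonneg := sub_cMin_div_nonneg θ
  induction k with
  | zero => simp
  | succ k ih =>
    rw [Function.iterate_succ_apply', Function.iterate_succ_apply', pow_succ', mul_assoc]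
    exact (besD1_substApply_le hℓ θ _ _).trans (by gcongr)

lemma le_besD1_iterate_substApply (k : ℕ) (x y : ℤ → A) :
    (((ℓ : ℝ) - cMax θ) / ℓ) ^ k * besD1 x y ≤
      besD1 ((substApply hℓ θ)^[k] x) ((substApply hℓ θ)^[k] y) := by
  have hnonneg := sub_cMax_div_nonneg θ
  induction k with
  | zero => simp
  | succ k ih =>
    rw [Function.iterate_succ_apply', Function.iterate_succ_apply', pow_succ', mul_assoc]
    exact le_trans (by gcongr) (le_besD1_substApply hℓ θ _ _)

/-- Dekking's coincidence condition: some column of some power of `θ` is constant. -/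
def HasCoincidence : Prop :=
  ∃ (k : ℕ) (j : Fin (ℓ ^ k)) (c : A), ∀ a, substPow hℓ θ k a j = c

variable {θ} in
lemma exists_apply_eq_apply_of_cMin_pos (h : 0 < cMin θ) (a b : A) :
    ∃ i, θ a i = θ b i := by
  classical
  rcases eq_or_ne a b with rfl | hab
  · obtain ⟨a', b', hab'⟩ := nontrivial_of_cMin_pos h
    obtain ⟨i, -⟩ := Finset.card_pos.1 (h.trans_le (cMin_le_coincCount hab'))
    exact ⟨i, rfl⟩
  · obtain ⟨i, hi⟩ := Finset.card_pos.1 (h.trans_le (cMin_le_coincCount hab))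
    exact ⟨i, (Finset.mem_filter.1 hi).2⟩

variable {θ} in
lemma hasCoincidence_of_cMin_pos [Finite A] (h : 0 < cMin θ) : HasCoincidence hℓ θ := by
  classical
  have := Fintype.ofFinite A
  obtain ⟨a₀, -⟩ := nontrivial_of_cMin_pos h
  suffices ∀ S : Finset A, ∃ (k : ℕ) (j : Fin (ℓ ^ k)) (c : A),
      ∀ a ∈ S, substPow hℓ θ k a j = c by
    obtain ⟨k, j, c, hc⟩ := this Finset.univ
    exact ⟨k, j, c, fun a => hc a (Finset.mem_univ a)⟩
  intro S
  induction S using Finset.induction_on with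
  | empty => exact ⟨0, ⟨0, by simp⟩, a₀, by simp⟩
  | insert a S _ ih =>
    obtain ⟨k, j, c, hc⟩ := ih
    obtain ⟨i, hi⟩ := exists_apply_eq_apply_of_cMin_pos h (substPow hℓ θ k a j) c
    have hlt : ℓ * j + i < ℓ ^ (k + 1) := by
      calc ℓ * j + i < ℓ * (j + 1) := by rw [mul_add_one]; gcongr; exact i.2
        _ ≤ ℓ ^ (k + 1) := by rw [pow_succ']; gcongr; exact j.2
    refine ⟨k + 1, ⟨ℓ * j + i, hlt⟩, θ c i, fun b hb => ?_⟩
    rw [substPow_succ_apply hℓ θ b (s := j) (i := i) rfl]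
    rcases Finset.mem_insert.1 hb with rfl | hb
    · exact hi
    · rw [hc b hb]

variable {hℓ θ}

lemma IsPrimitive.exists_substPow_eq (h : IsPrimitive hℓ θ) :
    ∃ m, ∀ a b, ∃ i, substPow hℓ θ m a i = b := by
  obtain ⟨m, -, hm⟩ := h
  refine ⟨m, fun a b => ?_⟩
  obtain ⟨j, hj₀, hj, hjb⟩ := hm a b
  lift j to ℕ using hj₀
  exact ⟨⟨j, by exact_mod_cast hj⟩, hjb⟩

lemma IsPrimitive.finite (h : IsPrimitive hℓ θ) : Finite A := by
  obtain ⟨m, hm⟩ := h.exists_substPow_eq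
  cases isEmpty_or_nonempty A with
  | inl _ => infer_instance
  | inr hA => exact .of_surjective (substPow hℓ θ m hA.some) (hm hA.some)

end Coincidence

/-! ### Mean distances along an orbit -/

section Orbit

variable {A : Type*} {ℓ : ℕ} {hℓ : 0 < ℓ} {θ : A → Fin ℓ → A}

lemma inv_length_le_besD1_shiftBy_one [Nontrivial A] (hθ : ∀ a b, ∃ i, θ a i = b) (z : ℤ → A) :
    (ℓ : ℝ)⁻¹ ≤ besD1 (substApply hℓ θ z) (shiftBy 1 (substApply hℓ θ z)) := by
  classical
  set x := substApply hℓ θ z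
  have hchange (n : ℕ) : ∃ i < ℓ, x (ℓ * n + i : ℕ) ≠ shiftBy 1 x (ℓ * n + i : ℕ) := by
    by_contra! hstay
    have hconst : ∀ i < ℓ, x (ℓ * n + i : ℕ) = x (ℓ * n : ℕ) := by
      intro i
      induction i with
      | zero => simp
      | succ i ih => exact fun hi => (hstay i (by lia)).symm.trans (ih (by lia))
    have hword (b : A) : b = x (ℓ * n : ℕ) := by
      obtain ⟨i, rfl⟩ := hθ (z n) b
      rw [← hconst i i.2, ← substApply_mul_add hℓ θ]
      norm_cast
    obtain ⟨a, b, hab⟩ := exists_pair_ne A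
    exact hab ((hword a).trans (hword b).symm)
  have hcount : 1 / (ℓ : ℝ) * upperDensity univ ≤ besD1 x (shiftBy 1 x) := by
    refine mul_upperDensity_le_of_le_block_count hℓ fun n _ => ?_
    rw [Nat.one_le_cast, Nat.one_le_iff_ne_zero, Nat.count_ne_iff_exists]
    exact hchange n
  rwa [upperDensity_univ, mul_one, one_div] at hcount

lemma exists_le_add_mul_eq_mul_add {L m Q : ℕ} (hm : 0 < m) (hL : 0 < L) (hLQ : L ≤ Q * m)
    (k r : ℤ) : ∃ t ≤ Q, ∃ (s : ℤ) (i : ℕ), i < m ∧ k + t * m = L * s + r + i := by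
  obtain ⟨s, g, hg⟩ := exists_eq_mul_add hL (r - k)
  obtain ⟨t, htg, hgt⟩ : ∃ t, (g : ℕ) ≤ t * m ∧ t * m < g + m := by
    refine ⟨(g + m - 1) / m, ?_, ?_⟩
    · have hlt := Nat.lt_div_mul_add hm (a := g + m - 1)
      omega
    · have hle := Nat.div_mul_le_self (g + m - 1) m
      omega
  have htQ : t * m < (Q + 1) * m := by linarith [g.2]
  refine ⟨t, Nat.lt_succ_iff.1 (Nat.lt_of_mul_lt_mul_right htQ), -s, t * m - g, by omega, ?_⟩
  rw [Nat.cast_sub htg]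
  push_cast
  linarith

lemma besD1_shiftBy_le_of_window {x : ℤ → A} {L m Q : ℕ} {r : ℤ} {u : ℕ → A} (hm : 0 < m)
    (hL : 0 < L) (hLQ : L ≤ Q * m) (hu : ∀ (s : ℤ), ∀ i < m, x (L * s + r + i) = u i) :
    besD1 x (shiftBy L x) ≤ 2 * Q * besD1 x (shiftBy m x) := by
  set E := {k : ℕ | x k ≠ shiftBy L x k} with hE
  set D := {k : ℕ | x k ≠ shiftBy m x k} with hD
  have hreach (k : ℕ) : ∃ t ≤ Q, k + t * m ∉ E := by
    obtain ⟨t, ht, s, i, hi, hk⟩ := exists_le_add_mul_eq_mul_add hm hL hLQ k r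
    refine ⟨t, ht, not_not.2 ?_⟩
    have hadd : (L : ℤ) * s + r + i + L = L * (s + 1) + r + i := by ring
    push_cast
    rw [shiftBy, hk, hadd, hu s i hi, hu (s + 1) i hi]
  have hexit : {k | k ∈ E ∧ k + m ∉ E} ⊆ D ∪ {k | k + L ∈ D} := by
    rintro k ⟨hk, hkm⟩
    by_contra! hD'
    simp only [hE, hD, mem_union, Set.mem_ofPred_eq, not_or, not_not, shiftBy] at hk hkm hD'
    push_cast at hkm hD'
    apply hk
    rw [hD'.1, hkm, hD'.2, add_right_comm]
  calc besD1 x (shiftBy L x)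
      ≤ Q * upperDensity {k | k ∈ E ∧ k + m ∉ E} := upperDensity_le_mul_upperDensity_exit hreach
    _ ≤ Q * (upperDensity D + upperDensity {k | k + L ∈ D}) := by
      gcongr
      exact upperDensity_le_add_of_subset_union hexit
    _ = 2 * Q * besD1 x (shiftBy m x) := by
      rw [upperDensity_add_right, besD1]
      ring

lemma HasCoincidence.exists_window (h : HasCoincidence hℓ θ) :
    ∃ k, ∀ n, ∃ (r : ℤ) (u : ℕ → A), ∀ x ∈ range (substApply hℓ θ)^[n + k],
      ∀ (s : ℤ), ∀ i < ℓ ^ n, x ((ℓ ^ (n + k) : ℕ) * s + r + i) = u i := by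
  obtain ⟨k, j, c, hc⟩ := h
  refine ⟨k, fun n => ⟨(ℓ ^ n : ℕ) * j, fun i => (substApply hℓ θ)^[n] (fun _ => c) i, ?_⟩⟩
  rintro _ ⟨y, rfl⟩ s i hi
  have hj : (substApply hℓ θ)^[k] y ((ℓ ^ k : ℕ) * s + j) = c := by
    rw [iterate_substApply, substApply_mul_add, hc]
  have hadd : ((ℓ ^ (n + k) : ℕ) * s + (ℓ ^ n : ℕ) * j + i : ℤ) =
      (ℓ ^ n : ℕ) * ((ℓ ^ k : ℕ) * s + j) + i := by
    push_cast
    ring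
  rw [hadd, Function.iterate_add_apply]
  simpa using iterate_substApply_congr hℓ θ (y := fun _ => c) (t := 0) hj n hi

lemma le_besD1_shiftBy_pow {x : ℤ → A} {M : ℕ} [Nontrivial A]
    (hM : ∀ a b, ∃ i, substPow hℓ θ M a i = b) (hx : ∀ k, x ∈ range (substApply hℓ θ)^[k]) (n : ℕ) :
    (((ℓ : ℝ) - cMax θ) / ℓ) ^ n * ((ℓ : ℝ) ^ M)⁻¹ ≤ besD1 x (shiftBy (ℓ ^ n : ℕ) x) := by
  obtain ⟨z, rfl⟩ := hx (n + M)
  have hchange : ((ℓ : ℝ) ^ M)⁻¹ ≤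
      besD1 ((substApply hℓ θ)^[M] z) (shiftBy 1 ((substApply hℓ θ)^[M] z)) := by
    rw [iterate_substApply]
    exact_mod_cast inv_length_le_besD1_shiftBy_one hM z
  have hshift : shiftBy (ℓ ^ n : ℕ) ((substApply hℓ θ)^[n + M] z) =
      (substApply hℓ θ)^[n] (shiftBy 1 ((substApply hℓ θ)^[M] z)) := by
    rw [iterate_substApply hℓ θ n, substApply_shiftBy, mul_one, ← iterate_substApply,
      Function.iterate_add_apply]
  have hnonneg := sub_cMax_div_nonneg θ
  rw [hshift, Function.iterate_add_apply]
  exact le_trans (by gcongr) (le_besD1_iterate_substApply hℓ θ n _ _)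

lemma exists_pow_gt_and_pow_le_mul {m N : ℕ} (hm : 0 < m) (hmN : m < ℓ ^ N) :
    ∃ n ≤ N, m < ℓ ^ n ∧ ℓ ^ n ≤ ℓ * m := by
  induction N with
  | zero => exact absurd hmN (by simpa using hm.ne')
  | succ N ih =>
    rcases lt_or_ge m (ℓ ^ N) with h | h
    · obtain ⟨n, hn, hmn⟩ := ih h
      exact ⟨n, hn.trans N.le_succ, hmn⟩
    · exact ⟨N + 1, le_rfl, hmN, by rw [pow_succ']; gcongr⟩

theorem HasCoincidence.exists_mul_pow_le_besD1_shiftBy [Nontrivial A] (h : HasCoincidence hℓ θ)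
    (hprim : IsPrimitive hℓ θ) (hC : cMax θ < ℓ) {x : ℤ → A}
    (hx : ∀ k, x ∈ range (substApply hℓ θ)^[k]) :
    ∃ κ : ℝ, 0 < κ ∧ ∀ N m : ℕ, 0 < m → m < ℓ ^ N →
      κ * (((ℓ : ℝ) - cMax θ) / ℓ) ^ N ≤ besD1 x (shiftBy m x) := by
  obtain ⟨M, hM⟩ := hprim.exists_substPow_eq
  obtain ⟨k, hk⟩ := h.exists_window
  have hℓ' : (0 : ℝ) < ℓ := by exact_mod_cast hℓ
  set lam := ((ℓ : ℝ) - cMax θ) / ℓ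
  have hlam₀ : 0 < lam := div_pos (sub_pos.2 (by exact_mod_cast hC)) hℓ'
  have hlam₁ : lam ≤ 1 := div_le_one_of_le₀ (by simp) hℓ'.le
  refine ⟨lam ^ k * ((ℓ : ℝ) ^ M)⁻¹ / (2 * ℓ ^ (k + 1)), by positivity, fun N m hm hmN => ?_⟩
  obtain ⟨n, hnN, hmn, hnm⟩ := exists_pow_gt_and_pow_le_mul hm hmN
  obtain ⟨r, u, hu⟩ := hk n
  have hLQ : ℓ ^ (n + k) ≤ ℓ ^ (k + 1) * m := by
    calc ℓ ^ (n + k) = ℓ ^ k * ℓ ^ n := by ring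
      _ ≤ ℓ ^ k * (ℓ * m) := by gcongr
      _ = ℓ ^ (k + 1) * m := by ring
  have hwindow : besD1 x (shiftBy (ℓ ^ (n + k) : ℕ) x) ≤
      2 * (ℓ ^ (k + 1) : ℕ) * besD1 x (shiftBy m x) :=
    besD1_shiftBy_le_of_window hm (pow_pos hℓ _) hLQ fun s i hi => hu x (hx _) s i (hi.trans hmn)
  rw [div_mul_eq_mul_div, div_le_iff₀' (by positivity)]
  calc lam ^ k * ((ℓ : ℝ) ^ M)⁻¹ * lam ^ N
      ≤ lam ^ k * ((ℓ : ℝ) ^ M)⁻¹ * lam ^ n := by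
        gcongr ?_ * ?_
        exact pow_le_pow_of_le_one hlam₀.le hlam₁ hnN
    _ = lam ^ (n + k) * ((ℓ : ℝ) ^ M)⁻¹ := by ring
    _ ≤ besD1 x (shiftBy (ℓ ^ (n + k) : ℕ) x) := le_besD1_shiftBy_pow hM hx _
    _ ≤ 2 * ℓ ^ (k + 1) * besD1 x (shiftBy m x) := by exact_mod_cast hwindow

lemma le_besD1_shiftBy_shiftBy {x : ℤ → A} {ε : ℝ} {K : ℕ}
    (h : ∀ m : ℕ, 0 < m → m < K → ε ≤ besD1 x (shiftBy m x)) {i j : ℕ} (hi : i < K) (hj : j < K)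
    (hij : i ≠ j) : ε ≤ besD1 (shiftBy i x) (shiftBy j x) := by
  wlog hlt : i < j generalizing i j
  · rw [besD1_comm]
    exact this hj hi hij.symm (by lia)
  obtain ⟨m, rfl⟩ := Nat.exists_eq_add_of_lt hlt
  calc ε ≤ besD1 x (shiftBy (m + 1 : ℕ) x) := h _ m.succ_pos (by lia)
    _ = besD1 (shiftBy i x) (shiftBy (i + m + 1 : ℕ) x) := by
      rw [← besD1_shiftBy i, shiftBy_shiftBy]
      push_cast
      rw [add_assoc]

end Orbit

/-! ### Separation numbers and their exponents -/

section SeparationNumber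

variable {α ι : Type*} [Fintype ι] {ρ : α → α → ℝ} {f : α → α} {X : Set α} {δ ν : ℝ}

lemma sepNum_le_card_of_subset_iUnion {V : ι → Set α} (hX : X ⊆ ⋃ i, V i)
    (hV : ∀ i, ∀ x ∈ V i, ∀ y ∈ V i, upperDensity {k : ℕ | δ ≤ ρ (f^[k] x) (f^[k] y)} < ν) :
    sepNum ρ f X δ ν ≤ Fintype.card ι := by
  refine iSup₂_le fun S hS => ?_
  have hclass (x : S) : ∃ i, (x : α) ∈ V i := mem_iUnion.1 (hX (hS.1 x.2))
  choose c hc using hclass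
  have hinj : c.Injective := by
    intro x y hxy
    by_contra hne
    exact (hS.2 x x.2 y y.2 (Subtype.coe_ne_coe.2 hne)).not_gt
      (hV (c x) x (hc x) y (hxy ▸ hc y))
  calc S.encard ≤ ENat.card ι := ENat.card_le_card_of_injective hinj
    _ = Fintype.card ι := ENat.card_eq_coe_fintype_card

lemma card_le_sepNum_of_injective {g : ι → α} (hinj : g.Injective) (hg : ∀ i, g i ∈ X)
    (hsep : ∀ i j, i ≠ j → ν ≤ upperDensity {k : ℕ | δ ≤ ρ (f^[k] (g i)) (f^[k] (g j))}) :
    Fintype.card ι ≤ sepNum ρ f X δ ν := by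
  have hrange : IsSepSet ρ f X δ ν (range g) := by
    refine ⟨range_subset_iff.2 hg, ?_⟩
    rintro _ ⟨i, rfl⟩ _ ⟨j, rfl⟩ hij
    exact hsep i j (ne_of_apply_ne g hij)
  calc (Fintype.card ι : ℕ∞) = (range g).encard := by
        rw [← image_univ, hinj.encard_image, encard_univ, ENat.card_eq_coe_fintype_card]
    _ ≤ sepNum ρ f X δ ν := le_iSup₂_of_le _ hrange le_rfl

end SeparationNumber

section LogRatio

variable {ν : ℝ} {s t : ℕ∞} {lam B : ℝ} {ℓ : ℕ}

lemma logRatio_mono (hν₀ : 0 ≤ ν) (hν₁ : ν ≤ 1) (hst : s ≤ t) : logRatio s ν ≤ logRatio t ν := by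
  rcases eq_or_ne t ⊤ with rfl | ht
  · simp [logRatio]
  have hs : s ≠ ⊤ := ne_top_of_le_ne_top ht hst
  have hlog : Real.log s.toNat ≤ Real.log t.toNat := by
    rcases s.toNat.eq_zero_or_pos with h | h
    · simpa [h] using Real.log_natCast_nonneg t.toNat
    · exact Real.log_le_log (by exact_mod_cast h) (by exact_mod_cast ENat.toNat_le_toNat hst ht)
  rw [logRatio, logRatio, if_neg hs, if_neg ht]
  exact ENNReal.ofReal_le_ofReal
    (div_le_div_of_nonneg_right hlog (neg_nonneg.2 (Real.log_nonpos hν₀ hν₁)))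

lemma logRatio_natCast_pow (ℓ N : ℕ) (ν : ℝ) :
    logRatio (ℓ ^ N : ℕ) ν = ENNReal.ofReal (N * Real.log ℓ / -Real.log ν) := by
  rw [logRatio, if_neg (ENat.natCast_ne_top _), ENat.toNat_natCast, Nat.cast_pow, Real.log_pow]

lemma tendsto_logb_add_mul_div_neg_log (hB : 0 < B) (hlam : Real.log lam ≠ 0) (c q : ℝ) :
    Tendsto (fun ν => (Real.logb lam (ν / B) + c) * q / -Real.log ν) (𝓝[>] 0)
      (𝓝 (q / -Real.log lam)) := by
  have hlim : Tendsto
      (fun ν => q / -Real.log lam + (Real.log B / Real.log lam - c) * q / Real.log ν)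
      (𝓝[>] 0) (𝓝 (q / -Real.log lam)) := by
    simpa using tendsto_const_nhds.add (Real.tendsto_log_nhdsGT_zero.const_div_atBot _)
  refine hlim.congr' ?_
  filter_upwards [Ioo_mem_nhdsGT one_pos] with ν hν
  have hlogν : Real.log ν ≠ 0 := (Real.log_neg hν.1 hν.2).ne
  rw [Real.logb, Real.log_div hν.1.ne' hB.ne']
  field_simp
  ring

lemma eventually_logb_div_nonneg (hB : 0 < B) (hlam₀ : 0 < lam) (hlam₁ : lam < 1) :
    ∀ᶠ ν in 𝓝[>] (0 : ℝ), 0 ≤ Real.logb lam (ν / B) := by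
  filter_upwards [Ioo_mem_nhdsGT hB] with ν hν
  exact Real.logb_nonneg_of_base_lt_one hlam₀ hlam₁ (div_pos hν.1 hB)
    (div_le_one_of_le₀ hν.2.le hB.le)

theorem limsup_logRatio_le {S : ℝ → ℕ∞} (hB : 0 < B) (hlam₀ : 0 < lam) (hlam₁ : lam < 1)
    (hS : ∀ ν > 0, ∀ N : ℕ, B * lam ^ N < ν → S ν ≤ (ℓ ^ N : ℕ)) :
    limsup (fun ν => logRatio (S ν) ν) (𝓝[>] 0) ≤
      ENNReal.ofReal (Real.log ℓ / -Real.log lam) := by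
  have hlim := ENNReal.tendsto_ofReal
    (tendsto_logb_add_mul_div_neg_log hB (Real.log_neg hlam₀ hlam₁).ne 1 (Real.log ℓ))
  rw [← hlim.limsup_eq]
  refine limsup_le_limsup ?_
  filter_upwards [Ioo_mem_nhdsGT one_pos, eventually_logb_div_nonneg hB hlam₀ hlam₁] with ν hν hlogb
  set N := ⌊Real.logb lam (ν / B)⌋₊ + 1 with hN
  have hpow : lam ^ N < ν / B := by
    rw [← Real.rpow_natCast, ←
      Real.logb_lt_iff_lt_rpow_of_base_lt_one hlam₀ hlam₁ (div_pos hν.1 hB)]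
    exact_mod_cast Nat.lt_floor_add_one _
  have hle : (N : ℝ) ≤ Real.logb lam (ν / B) + 1 := by
    rw [hN]
    push_cast
    gcongr
    exact Nat.floor_le hlogb
  have hlogν : 0 ≤ -Real.log ν := neg_nonneg.2 (Real.log_nonpos hν.1.le hν.2.le)
  calc logRatio (S ν) ν
      ≤ logRatio (ℓ ^ N : ℕ) ν :=
        logRatio_mono hν.1.le hν.2.le (hS ν hν.1 N (by rwa [← lt_div_iff₀' hB]))
    _ = ENNReal.ofReal (N * Real.log ℓ / -Real.log ν) := logRatio_natCast_pow ..
    _ ≤ _ := by gcongr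

theorem le_liminf_logRatio {S : ℝ → ℕ∞} (hB : 0 < B) (hlam₀ : 0 < lam) (hlam₁ : lam < 1)
    (hS : ∀ ν > 0, ∀ N : ℕ, ν ≤ B * lam ^ N → (ℓ ^ N : ℕ) ≤ S ν) :
    ENNReal.ofReal (Real.log ℓ / -Real.log lam) ≤
      liminf (fun ν => logRatio (S ν) ν) (𝓝[>] 0) := by
  have hlim := ENNReal.tendsto_ofReal
    (tendsto_logb_add_mul_div_neg_log hB (Real.log_neg hlam₀ hlam₁).ne (-1) (Real.log ℓ))
  rw [← hlim.liminf_eq]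
  refine liminf_le_liminf ?_
  filter_upwards [Ioo_mem_nhdsGT one_pos, eventually_logb_div_nonneg hB hlam₀ hlam₁] with ν hν hlogb
  set N := ⌊Real.logb lam (ν / B)⌋₊
  have hpow : ν / B ≤ lam ^ N := by
    rw [← Real.rpow_natCast, ←
      Real.le_logb_iff_rpow_le_of_base_lt_one hlam₀ hlam₁ (div_pos hν.1 hB)]
    exact Nat.floor_le hlogb
  have hle : Real.logb lam (ν / B) + -1 ≤ N := by
    linarith [Nat.lt_floor_add_one (Real.logb lam (ν / B))]
  have hlogν : 0 ≤ -Real.log ν := neg_nonneg.2 (Real.log_nonpos hν.1.le hν.2.le)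
  calc _ ≤ ENNReal.ofReal (N * Real.log ℓ / -Real.log ν) := by
        gcongr
    _ = logRatio (ℓ ^ N : ℕ) ν := (logRatio_natCast_pow ..).symm
    _ ≤ logRatio (S ν) ν :=
        logRatio_mono hν.1.le hν.2.le (hS ν hν.1 N (by rwa [← div_le_iff₀' hB]))

lemma neg_log_sub_div {a b : ℝ} (ha : a ≠ 0) (hab : b ≠ a) :
    -Real.log ((a - b) / a) = Real.log a - Real.log (a - b) := by
  rw [Real.log_div (sub_ne_zero.2 hab.symm) ha, neg_sub]

lemma sub_div_self_lt_one {a b : ℝ} (ha : 0 < a) (hb : 0 < b) : (a - b) / a < 1 :=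
  (div_lt_one ha).2 (sub_lt_self a hb)

end LogRatio

/-! ### Amorphic complexity of substitution subshifts -/

section AmorphicComplexity

variable {A : Type*} [TopologicalSpace A] {ℓ : ℕ} {hℓ : 0 < ℓ} {θ : A → Fin ℓ → A} {x₀ : ℤ → A}

lemma acUpper_orbitClosure_le_of_le [DiscreteTopology A]
    (hx₀ : ∀ k, x₀ ∈ range (substApply hℓ θ)^[k]) {lam : ℝ} (hlam₀ : 0 < lam) (hlam₁ : lam < 1)
    (hlam : ((ℓ : ℝ) - cMin θ) / ℓ ≤ lam) :
    acUpper cantorDist shift (orbitClosure x₀) ≤ ENNReal.ofReal (Real.log ℓ / -Real.log lam) := by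
  refine iSup₂_le fun δ hδ => ?_
  obtain ⟨B, hB, hDδ⟩ := exists_forall_Ddelta_cantorDist_le (A := A) hδ
  refine limsup_logRatio_le hB hlam₀ hlam₁ fun ν _ N hν => ?_
  let V (j : Fin (ℓ ^ N)) : Set (ℤ → A) := {x | ∃ z, x = shiftBy j ((substApply hℓ θ)^[N] z)}
  have hcover : orbitClosure x₀ ⊆ ⋃ j, V j := by
    intro x hx
    simp only [V, iterate_substApply]
    exact mem_iUnion.2 (exists_eq_shiftBy_substApply_of_mem_orbitClosure (pow_pos hℓ N)
      (substPow hℓ θ N) (iterate_substApply hℓ θ N ▸ hx₀ N) hx)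
  have hclose (z w : ℤ → A) :
      besD1 ((substApply hℓ θ)^[N] z) ((substApply hℓ θ)^[N] w) ≤ lam ^ N := by
    have hnonneg := sub_cMin_div_nonneg θ
    calc _ ≤ (((ℓ : ℝ) - cMin θ) / ℓ) ^ N * besD1 z w := besD1_iterate_substApply_le hℓ θ N z w
      _ ≤ lam ^ N * 1 := by
        gcongr
        exacts [besD1_nonneg z w, besD1_le_one z w]
      _ = lam ^ N := mul_one _
  rw [← Fintype.card_fin (ℓ ^ N)]
  refine sepNum_le_card_of_subset_iUnion hcover ?_
  rintro j _ ⟨z, rfl⟩ _ ⟨w, rfl⟩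
  refine (hDδ _ _).trans_lt (lt_of_le_of_lt ?_ hν)
  rw [besD1_shiftBy]
  gcongr
  exact hclose z w

theorem acUpper_orbitClosure_le [DiscreteTopology A]
    (hx₀ : ∀ k, x₀ ∈ range (substApply hℓ θ)^[k]) (hc : 0 < cMin θ) :
    acUpper cantorDist shift (orbitClosure x₀) ≤
      ENNReal.ofReal (Real.log ℓ / (Real.log ℓ - Real.log ((ℓ : ℝ) - cMin θ))) := by
  have hℓ' : (0 : ℝ) < ℓ := by exact_mod_cast hℓ
  rcases (cMin_le_length θ).lt_or_eq with hlt | heq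
  · have hlt' : (cMin θ : ℝ) < ℓ := by exact_mod_cast hlt
    rw [← neg_log_sub_div hℓ'.ne' hlt'.ne]
    exact acUpper_orbitClosure_le_of_le hx₀ (div_pos (sub_pos.2 hlt') hℓ')
      (sub_div_self_lt_one hℓ' (by exact_mod_cast hc)) le_rfl
  · -- Here `Real.log 0 = 0` turns the bound into `log ℓ / log ℓ`. The complexity is in fact `0`,
    -- because the bound for every contraction rate `lam` tends to `0` with `lam`.
    have hlim :
        Tendsto (fun lam => ENNReal.ofReal (Real.log ℓ / -Real.log lam)) (𝓝[>] 0) (𝓝 0) := by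
      simpa using ENNReal.tendsto_ofReal
        ((tendsto_neg_atBot_atTop.comp Real.tendsto_log_nhdsGT_zero).const_div_atTop (Real.log ℓ))
    refine (ge_of_tendsto hlim ?_).trans zero_le
    filter_upwards [Ioo_mem_nhdsGT one_pos] with lam hlam
    exact acUpper_orbitClosure_le_of_le hx₀ hlam.1 hlam.2 (by simpa [heq] using hlam.1.le)

theorem le_acLower_orbitClosure (hprim : IsPrimitive hℓ θ)
    (hx₀ : ∀ k, x₀ ∈ range (substApply hℓ θ)^[k]) (hc : 0 < cMin θ) (hC : cMax θ ≠ ℓ) :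
    ENNReal.ofReal (Real.log ℓ / (Real.log ℓ - Real.log ((ℓ : ℝ) - cMax θ))) ≤
      acLower cantorDist shift (orbitClosure x₀) := by
  have hℓ' : (0 : ℝ) < ℓ := by exact_mod_cast hℓ
  have := nontrivial_of_cMin_pos hc
  have := hprim.finite
  obtain ⟨a, b, hab⟩ := exists_pair_ne A
  have hmax : 0 < cMax θ := hc.trans_le ((cMin_le_coincCount hab).trans (coincCount_le_cMax hab))
  have hlt := (cMax_le_length θ).lt_of_ne hC
  have hlt' : (cMax θ : ℝ) < ℓ := by exact_mod_cast hlt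
  obtain ⟨κ, hκ, hbes⟩ :=
    (hasCoincidence_of_cMin_pos hℓ hc).exists_mul_pow_le_besD1_shiftBy hprim hlt hx₀
  have hlam₀ : 0 < ((ℓ : ℝ) - cMax θ) / ℓ := div_pos (sub_pos.2 hlt') hℓ'
  rw [← neg_log_sub_div hℓ'.ne' hlt'.ne]
  refine le_iSup₂_of_le 1 one_pos (le_liminf_logRatio hκ hlam₀
    (sub_div_self_lt_one hℓ' (by exact_mod_cast hmax)) fun ν hν N hνN => ?_)
  have hsep (i j : Fin (ℓ ^ N)) (hij : i ≠ j) : ν ≤ besD1 (shiftBy i x₀) (shiftBy j x₀) :=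
    hνN.trans (le_besD1_shiftBy_shiftBy (hbes N) i.2 j.2 (Fin.val_ne_of_ne hij))
  have hinj : Function.Injective fun i : Fin (ℓ ^ N) => shiftBy i x₀ := by
    intro i j hij
    by_contra hne
    have hle := hsep i j hne
    rw [show shiftBy i x₀ = shiftBy j x₀ from hij, besD1_self] at hle
    exact hle.not_gt hν
  rw [← Fintype.card_fin (ℓ ^ N)]
  exact card_le_sepNum_of_injective hinj (fun i => shiftBy_mem_orbitClosure i x₀)
    fun i j hij => (hsep i j hij).trans (besD1_le_Ddelta_cantorDist_one _ _)

end AmorphicComplexity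

theorem substitution_ac_bounds_of_coincidence_general
    {A : Type*} [TopologicalSpace A] [DiscreteTopology A]
    {ℓ : ℕ} (hℓ : 0 < ℓ) (θ : A → Fin ℓ → A) (hprim : IsPrimitive hℓ θ)
    (x₀ : ℤ → A) (p : ℕ) (hp : 1 ≤ p) (hper : (substApply hℓ θ)^[p] x₀ = x₀)
    (hc : 0 < cMin θ) :
    acUpper cantorDist shift (orbitClosure x₀) ≤
      ENNReal.ofReal (Real.log ℓ / (Real.log ℓ - Real.log ((ℓ : ℝ) - cMin θ))) ∧
    (cMax θ ≠ ℓ →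
      ENNReal.ofReal (Real.log ℓ / (Real.log ℓ - Real.log ((ℓ : ℝ) - cMax θ))) ≤
        acLower cantorDist shift (orbitClosure x₀)) :=
  have hx₀ := mem_range_iterate_of_isPeriodicPt hp hper
  ⟨acUpper_orbitClosure_le hx₀ hc, le_acLower_orbitClosure hprim hx₀ hc⟩

/-- If `X_θ` is infinite, has discrete spectrum and `c(θ) > 0`, then
`ac¯(σ|_{X_θ}) ≤ log ℓ / (log ℓ - log(ℓ - c(θ)))`, and if moreover `C(θ) ≠ ℓ`, then
`ac_(σ|_{X_θ}) ≥ log ℓ / (log ℓ - log(ℓ - C(θ)))`. -/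
theorem substitution_ac_bounds_of_coincidence
    {A : Type} [Fintype A] [TopologicalSpace A] [DiscreteTopology A]
    [MeasurableSpace A] [MeasurableSingletonClass A]
    {ℓ : ℕ} (hℓ : 0 < ℓ) (θ : A → Fin ℓ → A) (hprim : IsPrimitive hℓ θ)
    (x₀ : ℤ → A) (p : ℕ) (hp : 1 ≤ p) (hper : (substApply hℓ θ)^[p] x₀ = x₀)
    (hinf : (orbitClosure x₀).Infinite)
    (hds : HasDiscreteSpectrum (orbitClosure x₀))
    (hc : 0 < cMin θ) :
    acUpper cantorDist shift (orbitClosure x₀) ≤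
      ENNReal.ofReal (Real.log ℓ / (Real.log ℓ - Real.log ((ℓ : ℝ) - cMin θ))) ∧
    (cMax θ ≠ ℓ →
      ENNReal.ofReal (Real.log ℓ / (Real.log ℓ - Real.log ((ℓ : ℝ) - cMax θ))) ≤
        acLower cantorDist shift (orbitClosure x₀)) :=
  substitution_ac_bounds_of_coincidence_general hℓ θ hprim x₀ p hp hper hc
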